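/- Let C_m > 0 be a constant, depending only on m, such that for every s > 0 and every compact non-pluripolar K ⊆ {z ∈ ℂ^m : |z| ≤ s} one has sup_{|z| ≤ s} V_K*(z) ≤ C_m(log s + log 2 − log C(K)). Let E ⊆ ℂ^m be closed and suppose there exists β > 0 with limsup_{R→∞} (log C(E_R))/(log R) ≥ β > (C_m − 1)/C_m. Then E is non-thin at ∞. -/

import Mathlib

/-!
Write `E_R = E ∩ {|z| ≤ R}`. The growth hypothesis gives arbitrarily large `R` whose Robin constant
is below `-b log R`, where `(Cm - 1) / Cm < b < β`. For these `R`, Taylor's inequality yields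
`V_{E_R} ≤ a log R + c` on `|z| ≤ R`, with `a = Cm (1 - b) < 1`. Fix `l > 1` with `l a < 1`. For `u`
in the Lelong class with `u ≤ 0` on `E_R` and `r` fixed, `l u` is eventually below
`log (R / 2) - log r` on `|z| ≤ R`, so `max (l u) (log⁺ (|z| / r))` extends by `log⁺ (|z| / r)`
beyond `|z| = R` to a function of the Lelong class that is `≤ 0` on `E_r`
(`greenFn_mul_le_greenFn`). Hence `l V_{E_R} ≤ V_{E_r}`; the decreasing limit `v` of `V_{E_R}` is
finite and nonnegative and satisfies `l v ≤ v`, so `v = 0`.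

Two points need care.

* Taylor's inequality is assumed for non-pluripolar sets only, and a Robin constant below `+∞` does
  not obviously exclude pluripolarity in the sense of a globally defined plurisubharmonic function
  (this is Josefson's theorem). Passing to closed neighbourhoods of `E_R`, which contain balls,
  avoids the question (`greenFn_le_of_taylor`); that balls are not pluripolar is
  `SubharmonicOn'.eq_bot_at_one`.
* Subharmonicity is defined through polynomial majorants on whole discs, so gluing requires passing
  from small circles to arbitrary discs (`subharmonicOn_univ_of_local`, `PshOn.glue`).
-/

open Filter Metric

noncomputable section

/-- An upper semicontinuous `EReal`-valued function `u` (never `+∞`) on `U ⊆ ℂ` is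
*subharmonic* on `U` if it satisfies the harmonic-polynomial maximum criterion:
whenever `u ≤ Re p` on a circle contained (with its disc) in `U`, for a complex
polynomial `p`, then `u ≤ Re p` throughout the corresponding closed disc. -/
def SubharmonicOn' (u : ℂ → EReal) (U : Set ℂ) : Prop :=
  UpperSemicontinuousOn u U ∧ (∀ z ∈ U, u z < ⊤) ∧
  ∀ (c : ℂ) (r : ℝ), 0 < r → closedBall c r ⊆ U →
    ∀ p : Polynomial ℂ,
      (∀ z ∈ sphere c r, u z ≤ ((p.eval z).re : EReal)) →
      ∀ z ∈ closedBall c r, u z ≤ ((p.eval z).re : EReal)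

/-- A function `u : ℂ^m → [-∞,∞)` is *plurisubharmonic* on `U` if it is upper
semicontinuous on `U`, nowhere `+∞` on `U`, and its restriction to every complex
line is subharmonic. -/
def PshOn {m : ℕ} (u : EuclideanSpace ℂ (Fin m) → EReal)
    (U : Set (EuclideanSpace ℂ (Fin m))) : Prop :=
  UpperSemicontinuousOn u U ∧ (∀ z ∈ U, u z < ⊤) ∧
  ∀ (a b : EuclideanSpace ℂ (Fin m)), b ≠ 0 →
    SubharmonicOn' (fun w => u (a + w • b)) {w : ℂ | a + w • b ∈ U}

/-- The class `𝕃` of plurisubharmonic functions on `ℂ^m` of minimal growth: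
`u(z) - log |z| ≤ O(1)` as `|z| → ∞`. -/
def MinGrowth {m : ℕ} (u : EuclideanSpace ℂ (Fin m) → EReal) : Prop :=
  PshOn u Set.univ ∧ ∃ C R₀ : ℝ, ∀ z, R₀ ≤ ‖z‖ → u z ≤ ((Real.log ‖z‖ + C : ℝ) : EReal)

/-- The pluricomplex Green function (Siciak extremal function) of `E ⊆ ℂ^m`:
`V_E(z) = sup { u(z) : u ∈ 𝕃, u ≤ 0 on E }`. -/
def greenFn {m : ℕ} (E : Set (EuclideanSpace ℂ (Fin m)))
    (z : EuclideanSpace ℂ (Fin m)) : EReal :=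
  sSup ((fun u => u z) '' {u | MinGrowth u ∧ ∀ x ∈ E, u x ≤ 0})

/-- The upper semicontinuous regularization `V_E*` of the Green function. -/
def greenFnStar {m : ℕ} (E : Set (EuclideanSpace ℂ (Fin m)))
    (z : EuclideanSpace ℂ (Fin m)) : EReal :=
  Filter.limsup (greenFn E) (nhds z)

/-- `E ⊆ ℂ^m` is non-thin at `∞` if `lim_{R→∞} V_{E_R}(z) = 0` for all `z ∈ ℂ^m`,
where `E_R = E ∩ {|z| ≤ R}`. -/
def NonthinAtInfty {m : ℕ} (E : Set (EuclideanSpace ℂ (Fin m))) : Prop :=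
  ∀ z, Tendsto (fun R : ℝ => greenFn (E ∩ closedBall 0 R) z) atTop (nhds (0 : EReal))

/-- `A ⊆ ℂ^m` is pluripolar if `A ⊆ {u = -∞}` for some plurisubharmonic `u ≢ -∞` on `ℂ^m`. -/
def Pluripolar {m : ℕ} (A : Set (EuclideanSpace ℂ (Fin m))) : Prop :=
  ∃ u : EuclideanSpace ℂ (Fin m) → EReal, PshOn u Set.univ ∧ (∃ z, u z ≠ ⊥) ∧ ∀ a ∈ A, u a = ⊥

/-- The Robin constant `γ(K) = limsup_{z→∞} [V_K*(z) - log |z|]`.  The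
`ℂ^m`-capacity is `C(K) = e^{-γ(K)}`, so that `log C(K) = -γ(K)`. -/
def robinConst {m : ℕ} (K : Set (EuclideanSpace ℂ (Fin m))) : EReal :=
  Filter.limsup (fun z => greenFnStar K z - ((Real.log ‖z‖ : ℝ) : EReal))
    (Bornology.cobounded (EuclideanSpace ℂ (Fin m)))

/-! ### Affine maps of `EReal` and plurisubharmonic functions -/

theorem coe_affine_le_iff {l d x : ℝ} (hl : 0 < l) (a : EReal) :
    (l : EReal) * a + (d : EReal) ≤ (x : EReal) ↔ a ≤ (((x - d) / l : ℝ) : EReal) := by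
  induction a with
  | bot => simp [EReal.coe_mul_bot_of_pos hl]
  | top => simp [EReal.coe_mul_top_of_pos hl]
  | coe a =>
    norm_cast
    rw [le_div_iff₀ hl, mul_comm]
    constructor <;> intro h <;> linarith

theorem coe_affine_lt_top {l d : ℝ} (hl : 0 < l) {a : EReal} (ha : a < ⊤) :
    (l : EReal) * a + (d : EReal) < ⊤ := by
  induction a with
  | bot => simp [EReal.coe_mul_bot_of_pos hl]
  | top => simp at ha
  | coe a => norm_cast; exact EReal.coe_lt_top _

theorem continuous_coe_affine {l : ℝ} (d : ℝ) :
    Continuous fun a : EReal => (l : EReal) * a + (d : EReal) := by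
  refine continuous_iff_continuousAt.2 fun a => ?_
  have h1 : Tendsto (fun a : EReal => (l : EReal) * a) (nhds a) (nhds ((l : EReal) * a)) := by
    refine EReal.Tendsto.const_mul tendsto_id ?_ ?_ <;> left <;> simp
  have h2 := (EReal.continuousAt_add (p := ((l : EReal) * a, (d : EReal))) (by simp) (by simp)).tendsto
  exact h2.comp (h1.prodMk_nhds tendsto_const_nhds)

theorem monotone_coe_affine {l d : ℝ} (hl : 0 < l) :
    Monotone fun a : EReal => (l : EReal) * a + (d : EReal) := by
  intro a b hab
  exact add_le_add_left (mul_le_mul_of_nonneg_left hab (by exact_mod_cast hl.le)) _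

/-- Plurisubharmonicity is stable under `u ↦ l u + d` with `l > 0`. -/
theorem PshOn.affine {m : ℕ} {u : EuclideanSpace ℂ (Fin m) → EReal} (hu : PshOn u Set.univ)
    {l : ℝ} (hl : 0 < l) (d : ℝ) :
    PshOn (fun z => (l : EReal) * u z + (d : EReal)) Set.univ := by
  have hlift : ∀ {X : Type} [TopologicalSpace X] (f : X → EReal) (s : Set X),
      UpperSemicontinuousOn f s →
      UpperSemicontinuousOn (fun z => (l : EReal) * f z + (d : EReal)) s := fun f s hf =>
    (continuous_coe_affine d).comp_upperSemicontinuousOn hf (monotone_coe_affine hl)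
  obtain ⟨h1, h2, h3⟩ := hu
  refine ⟨hlift _ _ h1, fun z hz => coe_affine_lt_top hl (h2 z hz), fun a b hb => ?_⟩
  obtain ⟨k1, k2, k3⟩ := h3 a b hb
  refine ⟨hlift _ _ k1, fun z hz => coe_affine_lt_top hl (k2 z hz), ?_⟩
  intro c r hr hsub p hp z hz
  have key : ∀ w, (((Polynomial.C ((l : ℂ)⁻¹) * (p - Polynomial.C (d : ℂ))).eval w).re) =
      ((p.eval w).re - d) / l := by
    intro w
    simp only [Polynomial.eval_mul, Polynomial.eval_C, Polynomial.eval_sub]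
    rw [← Complex.ofReal_inv, Complex.re_ofReal_mul]
    simp [div_eq_inv_mul]
  have := k3 c r hr hsub (Polynomial.C ((l : ℂ)⁻¹) * (p - Polynomial.C (d : ℂ))) (by
    intro w hw
    rw [key]
    exact (coe_affine_le_iff hl _).1 (hp w hw)) z hz
  rw [key] at this
  exact (coe_affine_le_iff hl _).2 this

/-! ### Local criterion and gluing -/

/-- A local criterion for subharmonicity: for an upper semicontinuous function it suffices to
compare values at the centres of all sufficiently small circles.  If the polynomial maximum
criterion failed on some disc about `c`, then `u - Re p + ε |z - c|²` would have an interior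
maximum `z₀` for small `ε`; on a circle about `z₀` the term `|z - c|²` is the real part of a
polynomial whose value at `z₀` is strictly larger than `|z₀ - c|²`. -/
theorem subharmonicOn_univ_of_local {u : ℂ → EReal} (husc : UpperSemicontinuous u)
    (hlt : ∀ z, u z < ⊤)
    (hloc : ∀ z₀, ∃ r₀ > 0, ∀ r, 0 < r → r < r₀ → ∀ p : Polynomial ℂ,
      (∀ z ∈ sphere z₀ r, u z ≤ ((p.eval z).re : EReal)) → u z₀ ≤ ((p.eval z₀).re : EReal)) :
    SubharmonicOn' u Set.univ := by
  refine ⟨husc.upperSemicontinuousOn _, fun z _ => hlt z, ?_⟩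
  intro c r hr _ p hp z₁ hz₁
  by_contra hcon
  rw [not_le] at hcon
  obtain ⟨y, hy1, hy2⟩ := EReal.lt_iff_exists_real_btwn.1 hcon
  have hy1' : (p.eval z₁).re < y := by exact_mod_cast hy1
  obtain ⟨ε, hε, hεr⟩ : ∃ ε : ℝ, 0 < ε ∧ ε * r ^ 2 = y - (p.eval z₁).re :=
    ⟨(y - (p.eval z₁).re) / r ^ 2, by have := sub_pos.2 hy1'; positivity, by field_simp⟩
  set ψ : ℂ → ℝ := fun z => ε * ‖z - c‖ ^ 2 - (p.eval z).re with hψ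
  have hψc : Continuous ψ := by
    have := p.continuous
    fun_prop
  have hφ : UpperSemicontinuous fun z => u z + (ψ z : EReal) := by
    refine husc.add' (continuous_coe_real_ereal.comp hψc).upperSemicontinuous ?_
    intro x
    exact EReal.continuousAt_add (by simp) (by simp)
  obtain ⟨z₀, hz₀, hmax⟩ := (hφ.upperSemicontinuousOn (closedBall c r)).exists_isMaxOn
    ⟨z₁, hz₁⟩ (isCompact_closedBall c r)
  have hmax' : ∀ z ∈ closedBall c r, u z + (ψ z : EReal) ≤ u z₀ + (ψ z₀ : EReal) := hmax
  have hbig : ((ε * r ^ 2 : ℝ) : EReal) < u z₀ + (ψ z₀ : EReal) := by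
    refine lt_of_lt_of_le ?_ (hmax' z₁ hz₁)
    have hle : ((ε * r ^ 2 : ℝ) : EReal) ≤ ((y + ψ z₁ : ℝ) : EReal) := by
      have : 0 ≤ ε * ‖z₁ - c‖ ^ 2 := by positivity
      have h2 : ε * r ^ 2 ≤ y + ψ z₁ := by simp only [hψ]; linarith
      exact_mod_cast h2
    refine lt_of_le_of_lt hle ?_
    rw [EReal.coe_add]
    exact EReal.add_lt_add_right_coe hy2 _
  have hne_top : u z₀ ≠ ⊤ := (hlt z₀).ne
  have hne_bot : u z₀ ≠ ⊥ := by
    intro h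
    rw [h] at hbig
    simp at hbig
  obtain ⟨t, ht⟩ : ∃ t : ℝ, u z₀ = t := ⟨(u z₀).toReal, (EReal.coe_toReal hne_top hne_bot).symm⟩
  rw [ht] at hbig hmax'
  have hbig' : ε * r ^ 2 < t + ψ z₀ := by exact_mod_cast hbig
  have hmem : z₀ ∈ ball c r := by
    rw [mem_ball]
    refine lt_of_le_of_ne (mem_closedBall.1 hz₀) fun h => ?_
    have := hp z₀ (mem_sphere.2 h)
    rw [ht] at this
    have h3 : t ≤ (p.eval z₀).re := by exact_mod_cast this
    simp only [hψ] at hbig'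
    rw [← dist_eq_norm, h] at hbig'
    linarith
  obtain ⟨r₁, hr₁, hsub⟩ := Metric.isOpen_iff.1 isOpen_ball z₀ hmem
  obtain ⟨r₀, hr₀, hloc'⟩ := hloc z₀
  set ρ := min r₀ r₁ / 2 with hρ
  have hmin : 0 < min r₀ r₁ := lt_min hr₀ hr₁
  have hρ0 : 0 < ρ := by positivity
  have hρ1 : ρ < r₀ := by have := min_le_left r₀ r₁; linarith
  have hρ2 : ρ < r₁ := by have := min_le_right r₀ r₁; linarith
  set q : Polynomial ℂ := p + Polynomial.C ((t + ψ z₀ - ε * (‖z₀ - c‖ ^ 2 + ρ ^ 2) : ℝ) : ℂ) -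
    Polynomial.C (2 * (ε : ℂ) * (starRingEnd ℂ) (z₀ - c)) *
      (Polynomial.X - Polynomial.C z₀) with hq
  have hqre : ∀ z, (q.eval z).re = (p.eval z).re + (t + ψ z₀ - ε * (‖z₀ - c‖ ^ 2 + ρ ^ 2)) -
      2 * ε * ((z₀ - c).re * (z - z₀).re + (z₀ - c).im * (z - z₀).im) := by
    intro z
    simp only [hq, Polynomial.eval_sub, Polynomial.eval_add, Polynomial.eval_mul,
      Polynomial.eval_C, Polynomial.eval_X, Complex.sub_re, Complex.add_re, Complex.ofReal_re,
      Complex.mul_re, Complex.mul_im, Complex.ofReal_im, Complex.conj_re, Complex.conj_im,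
      Complex.sub_im, Complex.re_ofNat, Complex.im_ofNat]
    ring
  have hle := hloc' ρ hρ0 hρ1 q (by
    intro z hz
    have hz' : ‖z - z₀‖ = ρ := by rw [← dist_eq_norm]; exact hz
    have hzc : z ∈ closedBall c r := by
      apply ball_subset_closedBall
      apply hsub
      rw [mem_ball, dist_eq_norm, hz']
      exact hρ2
    have h1 := hmax' z hzc
    have hexp : ‖z - c‖ ^ 2 = ‖z₀ - c‖ ^ 2 + ρ ^ 2 +
        2 * ((z₀ - c).re * (z - z₀).re + (z₀ - c).im * (z - z₀).im) := by
      rw [← hz']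
      simp only [← Complex.normSq_eq_norm_sq, Complex.normSq_apply, Complex.sub_re, Complex.sub_im]
      ring
    have h2 : u z + (ψ z : EReal) ≤ ((t + ψ z₀ : ℝ) : EReal) := by rw [EReal.coe_add]; exact h1
    have h3 := (coe_affine_le_iff (l := 1) (d := ψ z) (x := t + ψ z₀) one_pos (u z)).1
      (by rwa [EReal.coe_one, one_mul])
    refine h3.trans ?_
    rw [hqre]
    rw [EReal.coe_le_coe_iff, div_one]
    simp only [hψ]
    rw [hexp]
    linarith)
  rw [ht, hqre] at hle
  have hle' := EReal.coe_le_coe_iff.1 hle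
  simp [hψ] at hle'
  nlinarith [mul_pos hε (pow_pos hρ0 2)]

/-- Gluing: a plurisubharmonic `g` may be replaced by `max f g` inside the ball `‖z‖ < R`
provided `f ≤ g` on a shell `R' ≤ ‖z‖ < R`. -/
theorem PshOn.glue {m : ℕ} {f g : EuclideanSpace ℂ (Fin m) → EReal} (hf : PshOn f Set.univ)
    (hg : PshOn g Set.univ) {R' R : ℝ} (hR : R' < R)
    (hfg : ∀ z, R' ≤ ‖z‖ → ‖z‖ < R → f z ≤ g z) :
    PshOn (fun z => if ‖z‖ < R then max (f z) (g z) else g z) Set.univ := by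
  set w : EuclideanSpace ℂ (Fin m) → EReal :=
    fun z => if ‖z‖ < R then max (f z) (g z) else g z with hw
  have hin : ∀ z, ‖z‖ < R → w z = max (f z) (g z) := fun z hz => if_pos hz
  have hout : ∀ z, R' < ‖z‖ → w z = g z := by
    intro z hz
    by_cases h : ‖z‖ < R
    · rw [hin z h]
      exact max_eq_right (hfg z hz.le h)
    · exact if_neg h
  have husc : UpperSemicontinuous w := by
    have hf1 := upperSemicontinuousOn_univ_iff.1 hf.1
    have hg1 := upperSemicontinuousOn_univ_iff.1 hg.1
    intro z
    by_cases h : ‖z‖ < R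
    · have hev : (fun z => max (f z) (g z)) =ᶠ[nhds z] w := by
        filter_upwards [(isOpen_lt continuous_norm continuous_const).mem_nhds h] with y hy
        exact (hin y hy).symm
      intro y hy
      filter_upwards [(hf1.sup hg1) z y (by rw [hin z h] at hy; exact hy), hev] with x hx hxe
      rwa [← hxe]
    · have h' : R' < ‖z‖ := lt_of_lt_of_le hR (not_lt.1 h)
      have hev : g =ᶠ[nhds z] w := by
        filter_upwards [(isOpen_lt continuous_const continuous_norm).mem_nhds h'] with y hy
        exact (hout y hy).symm
      intro y hy
      filter_upwards [hg1 z y (by rw [hout z h'] at hy; exact hy), hev] with x hx hxe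
      rwa [← hxe]
  have hlt : ∀ z, w z < ⊤ := by
    intro z
    simp only [hw]
    split_ifs
    · exact max_lt (hf.2.1 z trivial) (hg.2.1 z trivial)
    · exact hg.2.1 z trivial
  refine ⟨husc.upperSemicontinuousOn _, fun z _ => hlt z, fun a b hb => ?_⟩
  have hline : Continuous fun t : ℂ => a + t • b := by fun_prop
  refine subharmonicOn_univ_of_local (husc.comp hline) (fun z => hlt _) fun t₀ => ?_
  by_cases h : ‖a + t₀ • b‖ < R
  · have hopen : IsOpen {t : ℂ | ‖a + t • b‖ < R} :=
      isOpen_lt (hline.norm) continuous_const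
    obtain ⟨r₀, hr₀, hsub⟩ := Metric.isOpen_iff.1 hopen t₀ h
    refine ⟨r₀, hr₀, fun r hr hrr p hp => ?_⟩
    have hp' : ∀ t ∈ sphere t₀ r,
        max (f (a + t • b)) (g (a + t • b)) ≤ ((p.eval t).re : EReal) := by
      intro t ht
      rw [← hin _ (hsub (by rw [mem_ball, mem_sphere.1 ht]; exact hrr))]
      exact hp t ht
    have hc : t₀ ∈ closedBall t₀ r := mem_closedBall_self hr.le
    rw [hin _ h]
    exact max_le
      ((hf.2.2 a b hb).2.2 t₀ r hr (fun _ _ => trivial) p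
        (fun t ht => (le_max_left _ _).trans (hp' t ht)) t₀ hc)
      ((hg.2.2 a b hb).2.2 t₀ r hr (fun _ _ => trivial) p
        (fun t ht => (le_max_right _ _).trans (hp' t ht)) t₀ hc)
  · have h' : R' < ‖a + t₀ • b‖ := lt_of_lt_of_le hR (not_lt.1 h)
    have hopen : IsOpen {t : ℂ | R' < ‖a + t • b‖} :=
      isOpen_lt continuous_const (hline.norm)
    obtain ⟨r₀, hr₀, hsub⟩ := Metric.isOpen_iff.1 hopen t₀ h'
    refine ⟨r₀, hr₀, fun r hr hrr p hp => ?_⟩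
    have hc : t₀ ∈ closedBall t₀ r := mem_closedBall_self hr.le
    rw [hout _ h']
    refine (hg.2.2 a b hb).2.2 t₀ r hr (fun _ _ => trivial) p (fun t ht => ?_) t₀ hc
    have := hp t ht
    rwa [hout _ (hsub (by rw [mem_ball, mem_sphere.1 ht]; exact hrr))] at this

/-- `log⁺(‖z‖ / r)` is plurisubharmonic: `log ‖h‖ ≤ Re p` means `‖e^{-p} h‖ ≤ 1`, so the
maximum modulus principle applies along every complex line. -/
theorem pshOn_logPlus {m : ℕ} {r : ℝ} (hr : 0 < r) :
    PshOn (fun z : EuclideanSpace ℂ (Fin m) => ((Real.log (max (‖z‖ / r) 1) : ℝ) : EReal))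
      Set.univ := by
  have hcont : Continuous fun z : EuclideanSpace ℂ (Fin m) =>
      ((Real.log (max (‖z‖ / r) 1) : ℝ) : EReal) := by
    refine continuous_coe_real_ereal.comp (Continuous.log (by fun_prop) fun z => ?_)
    exact (lt_of_lt_of_le one_pos (le_max_right _ _)).ne'
  have hiff : ∀ (z : EuclideanSpace ℂ (Fin m)) (x : ℂ),
      ((Real.log (max (‖z‖ / r) 1) : ℝ) : EReal) ≤ ((x.re : ℝ) : EReal) ↔
        ‖Complex.exp (-x) • z‖ ≤ r ∧ ‖Complex.exp (-x)‖ ≤ 1 := by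
    intro z x
    rw [EReal.coe_le_coe_iff, Real.log_le_iff_le_exp (lt_of_lt_of_le one_pos (le_max_right _ _)),
      max_le_iff, norm_smul, Complex.norm_exp, Complex.neg_re, Real.exp_neg,
      inv_mul_le_iff₀ (Real.exp_pos _), inv_le_one₀ (Real.exp_pos _), div_le_iff₀ hr]
  refine ⟨hcont.upperSemicontinuous.upperSemicontinuousOn _, fun z _ => EReal.coe_lt_top _,
    fun a b hb => ⟨?_, fun z _ => EReal.coe_lt_top _, ?_⟩⟩
  · exact (hcont.comp (by fun_prop : Continuous fun t : ℂ => a + t • b)).upperSemicontinuous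
      |>.upperSemicontinuousOn _
  intro c ρ hρ _ p hp t ht
  have hcl : closure (ball c ρ) = closedBall c ρ := closure_ball c hρ.ne'
  have hfr : frontier (ball c ρ) = sphere c ρ := frontier_ball c hρ.ne'
  have hd1 : Differentiable ℂ fun t : ℂ => Complex.exp (-(p.eval t)) :=
    (p.differentiable.neg).cexp
  have hd2 : Differentiable ℂ fun t : ℂ => Complex.exp (-(p.eval t)) • (a + t • b) :=
    hd1.smul (by fun_prop)
  rw [hiff]
  rw [← hcl] at ht
  constructor
  · exact Complex.norm_le_of_forall_mem_frontier_norm_le isBounded_ball hd2.diffContOnCl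
      (fun z hz => ((hiff _ _).1 (hp z (hfr ▸ hz))).1) ht
  · exact Complex.norm_le_of_forall_mem_frontier_norm_le isBounded_ball hd1.diffContOnCl
      (fun z hz => ((hiff _ _).1 (hp z (hfr ▸ hz))).2) ht

/-! ### Balls are not pluripolar -/

/-- A subharmonic function on `ℂ` equal to `-∞` near `0` is `-∞` at `1`.  On the circle
`|w - 1| = 1` one has `Re (1 / w) = 1 / 2`, whereas `1 / w` equals `1` at the centre.  Hence a
polynomial approximation `Q` of `(1 + ε) / (w + ε)` satisfies `Q(1) = 1` and `Re Q ≤ 7 / 8` on the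
part of the circle away from `0`, and the criterion applies to `M - N (Q - 7 / 8)` for all `N`. -/
theorem SubharmonicOn'.eq_bot_at_one {v : ℂ → EReal} (hv : SubharmonicOn' v Set.univ) {δ : ℝ}
    (hδ : 0 < δ) (hbot : ∀ w ∈ ball (0 : ℂ) δ, v w = ⊥) : v 1 = ⊥ := by
  wlog hδ1 : δ ≤ 1 generalizing δ
  · exact this one_pos (fun w hw => hbot w (ball_subset_ball (not_le.1 hδ1).le hw)) le_rfl
  obtain ⟨husc, hlt, hcrit⟩ := hv
  obtain ⟨w₀, -, hmax⟩ := (husc.mono (Set.subset_univ (closedBall (1 : ℂ) 1))).exists_isMaxOn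
    ⟨1, mem_closedBall_self zero_le_one⟩ (isCompact_closedBall _ _)
  obtain ⟨M, hM0, -⟩ := EReal.lt_iff_exists_real_btwn.1 (hlt w₀ trivial)
  have hM : ∀ w ∈ closedBall (1 : ℂ) 1, v w ≤ (M : EReal) := fun w hw => (hmax hw).trans hM0.le
  set ε : ℝ := δ ^ 2 / 8 with hε
  have hε0 : 0 < ε := by positivity
  have hε1 : ε ≤ 1 / 8 := by rw [hε]; nlinarith
  obtain ⟨n, hn⟩ : ∃ n : ℕ, ((1 + ε)⁻¹) ^ n < δ / 16 :=
    exists_pow_lt_of_lt_one (by positivity) (inv_lt_one_of_one_lt₀ (by linarith))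
  have hn0 : n ≠ 0 := by
    rintro rfl
    rw [pow_zero] at hn
    linarith
  set T : Polynomial ℂ := Polynomial.C (((1 + ε)⁻¹ : ℝ) : ℂ) * (1 - Polynomial.X) with hT
  set Q : Polynomial ℂ := ∑ k ∈ Finset.range n, T ^ k with hQ
  have hTe : ∀ w, T.eval w = (((1 + ε)⁻¹ : ℝ) : ℂ) * (1 - w) := fun w => by simp [hT]
  have hQe : ∀ w, Q.eval w = ∑ k ∈ Finset.range n, (T.eval w) ^ k := fun w => by
    simp [hQ, Polynomial.eval_finsetSum]
  have hQ1 : Q.eval 1 = 1 := by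
    rw [hQe, hTe]
    obtain ⟨k, rfl⟩ := Nat.exists_eq_succ_of_ne_zero hn0
    simp [Finset.sum_range_succ']
  have hQarc : ∀ w ∈ sphere (1 : ℂ) 1, δ ≤ ‖w‖ → (Q.eval w).re ≤ 7 / 8 := by
    intro w hw hwδ
    have hw1 : ‖1 - w‖ = 1 := by rw [← dist_eq_norm, dist_comm]; exact hw
    have hcirc : w.re ^ 2 + w.im ^ 2 = 2 * w.re := by
      have := Complex.sq_norm (1 - w)
      rw [hw1, Complex.normSq_apply] at this
      simp at this
      nlinarith
    have hδw : δ ^ 2 ≤ 2 * w.re := by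
      have h1 : δ ^ 2 ≤ ‖w‖ ^ 2 := by gcongr
      rw [Complex.sq_norm, Complex.normSq_apply] at h1
      nlinarith
    have hx : 4 * ε ≤ w.re := by rw [hε]; linarith
    have hne : w + (ε : ℂ) ≠ 0 := by
      intro h
      have := congrArg Complex.re h
      simp at this
      linarith
    have hne' : (1 : ℂ) + (ε : ℂ) ≠ 0 := by
      intro h
      have := congrArg Complex.re h
      simp at this
      linarith
    have hgeom : Q.eval w = ((1 + ε : ℝ) : ℂ) * (w + ε)⁻¹ -
        ((1 + ε : ℝ) : ℂ) * (T.eval w) ^ n * (w + ε)⁻¹ := by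
      have h1 := mul_neg_geom_sum (T.eval w) n
      rw [← hQe] at h1
      have h2 : 1 - T.eval w = (w + ε) * (((1 + ε : ℝ) : ℂ))⁻¹ := by
        rw [hTe]
        push_cast
        field_simp
        ring
      rw [h2] at h1
      have h3 : ((1 + ε : ℝ) : ℂ) ≠ 0 := by push_cast; exact hne'
      field_simp at h1 ⊢
      linear_combination h1
    have hmain : (((1 + ε : ℝ) : ℂ) * (w + ε)⁻¹).re ≤ 3 / 4 := by
      have hsq : Complex.normSq (w + ε) = 2 * w.re + 2 * ε * w.re + ε ^ 2 := by
        rw [Complex.normSq_apply]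
        simp
        nlinarith
      rw [Complex.re_ofReal_mul, Complex.inv_re, hsq, ← mul_div_assoc,
        div_le_iff₀ (by nlinarith)]
      simp
      nlinarith
    have herr : ‖((1 + ε : ℝ) : ℂ) * (T.eval w) ^ n * (w + ε)⁻¹‖ ≤ 1 / 8 := by
      have hTn : ‖T.eval w‖ = (1 + ε)⁻¹ := by
        rw [hTe, norm_mul, hw1, mul_one, Complex.norm_real, Real.norm_of_nonneg (by positivity)]
      have hden : δ ≤ ‖w + ε‖ := by
        refine hwδ.trans ?_
        rw [← sq_le_sq₀ (norm_nonneg _) (norm_nonneg _), Complex.sq_norm, Complex.sq_norm,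
          Complex.normSq_apply, Complex.normSq_apply]
        simp
        nlinarith
      rw [norm_mul, norm_mul, norm_pow, hTn, norm_inv, Complex.norm_real,
        Real.norm_of_nonneg (by positivity), ← div_eq_mul_inv,
        div_le_iff₀ (lt_of_lt_of_le hδ hden)]
      have : (1 + ε) * ((1 + ε)⁻¹) ^ n ≤ 2 * (δ / 16) :=
        mul_le_mul (by linarith) hn.le (by positivity) (by norm_num)
      linarith
    rw [hgeom, Complex.sub_re]
    have := (abs_le.1 ((Complex.abs_re_le_norm _).trans herr)).1
    linarith
  rw [EReal.eq_bot_iff_forall_lt]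
  intro y
  set N : ℝ := 8 * (|M - y| + 1) with hN
  have hN0 : 0 ≤ N := by positivity
  set P : Polynomial ℂ := Polynomial.C (M : ℂ) - Polynomial.C (N : ℂ) *
    (Q - Polynomial.C ((7 / 8 : ℝ) : ℂ)) with hP
  have hPe : ∀ w, (P.eval w).re = M - N * ((Q.eval w).re - 7 / 8) := by
    intro w
    simp only [hP, Polynomial.eval_sub, Polynomial.eval_mul, Polynomial.eval_C, Complex.sub_re,
      Complex.re_ofReal_mul, Complex.ofReal_re]
  have h1 := hcrit 1 1 one_pos (Set.subset_univ _) P (by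
    intro w hw
    by_cases hwδ : ‖w‖ < δ
    · rw [hbot w (by simpa using hwδ)]
      exact bot_le
    · refine (hM w (sphere_subset_closedBall hw)).trans ?_
      rw [hPe]
      have := hQarc w hw (not_lt.1 hwδ)
      have h2 : M ≤ M - N * ((Q.eval w).re - 7 / 8) := by nlinarith
      exact_mod_cast h2) 1 (mem_closedBall_self zero_le_one)
  rw [hPe, hQ1] at h1
  refine lt_of_le_of_lt h1 ?_
  have h2 : M - N * ((1 : ℂ).re - 7 / 8) < y := by
    rw [Complex.one_re]
    have := le_abs_self (M - y)
    linarith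
  exact_mod_cast h2

theorem not_pluripolar_of_closedBall_subset {m : ℕ} {A : Set (EuclideanSpace ℂ (Fin m))}
    {x : EuclideanSpace ℂ (Fin m)} {δ : ℝ} (hδ : 0 < δ) (hA : closedBall x δ ⊆ A) :
    ¬ Pluripolar A := by
  rintro ⟨u, hu, ⟨y, hy⟩, hbot⟩
  apply hy
  by_cases hxy : y = x
  · exact hbot y (hA (hxy ▸ mem_closedBall_self hδ.le))
  have hb : y - x ≠ 0 := sub_ne_zero.2 hxy
  have hb' : 0 < ‖y - x‖ := norm_pos_iff.2 hb
  have hv : SubharmonicOn' (fun w : ℂ => u (x + w • (y - x))) Set.univ := hu.2.2 x (y - x) hb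
  have := hv.eq_bot_at_one (δ := δ / ‖y - x‖) (by positivity) (by
    intro w hw
    apply hbot
    apply hA
    rw [mem_ball_zero_iff, lt_div_iff₀ hb'] at hw
    rw [mem_closedBall, dist_eq_norm, add_sub_cancel_left, norm_smul]
    exact hw.le)
  simpa using this

/-! ### Green functions and Robin constants -/

theorem minGrowth_zero {m : ℕ} : MinGrowth (fun _ : EuclideanSpace ℂ (Fin m) => (0 : EReal)) := by
  refine ⟨⟨upperSemicontinuous_const.upperSemicontinuousOn _, fun z _ => EReal.zero_lt_top,
    fun a b _ => ⟨upperSemicontinuous_const.upperSemicontinuousOn _,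
      fun z _ => EReal.zero_lt_top, ?_⟩⟩, 0, 1, fun z hz => ?_⟩
  · intro c ρ hρ _ p hp t ht
    have hiff : ∀ x : ℂ, (0 : EReal) ≤ ((x.re : ℝ) : EReal) ↔ ‖Complex.exp (-x)‖ ≤ 1 := by
      intro x
      rw [Complex.norm_exp, Real.exp_le_one_iff, Complex.neg_re, neg_nonpos, EReal.coe_nonneg]
    rw [← closure_ball c hρ.ne'] at ht
    have hd : Differentiable ℂ fun t : ℂ => Complex.exp (-(p.eval t)) := (p.differentiable.neg).cexp
    rw [hiff]
    exact Complex.norm_le_of_forall_mem_frontier_norm_le isBounded_ball hd.diffContOnCl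
      (fun z hz => (hiff _).1 (hp z (frontier_ball c hρ.ne' ▸ hz))) ht
  · rw [add_zero, EReal.coe_nonneg]
    exact Real.log_nonneg hz

theorem greenFn_nonneg {m : ℕ} (E : Set (EuclideanSpace ℂ (Fin m)))
    (z : EuclideanSpace ℂ (Fin m)) : 0 ≤ greenFn E z :=
  le_sSup ⟨fun _ => 0, ⟨minGrowth_zero, fun _ _ => le_rfl⟩, rfl⟩

theorem greenFn_anti {m : ℕ} {E F : Set (EuclideanSpace ℂ (Fin m))} (h : E ⊆ F)
    (z : EuclideanSpace ℂ (Fin m)) : greenFn F z ≤ greenFn E z :=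
  sSup_le_sSup (Set.image_mono fun _ hu => ⟨hu.1, fun x hx => hu.2 x (h hx)⟩)

theorem greenFn_le_star {m : ℕ} (E : Set (EuclideanSpace ℂ (Fin m)))
    (z : EuclideanSpace ℂ (Fin m)) : greenFn E z ≤ greenFnStar E z := by
  refine le_limsup_of_frequently_le ?_
  rw [frequently_iff]
  intro U hU
  exact ⟨z, mem_of_mem_nhds hU, le_rfl⟩

theorem robinConst_anti {m : ℕ} {E F : Set (EuclideanSpace ℂ (Fin m))} (h : E ⊆ F) :
    robinConst F ≤ robinConst E :=
  limsup_le_limsup (Eventually.of_forall fun _ => EReal.sub_le_sub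
    (limsup_le_limsup (Eventually.of_forall fun y => greenFn_anti h y)) le_rfl)

theorem greenFn_empty {m : ℕ} (z : EuclideanSpace ℂ (Fin m)) :
    greenFn (∅ : Set (EuclideanSpace ℂ (Fin m))) z = ⊤ := by
  rw [EReal.eq_top_iff_forall_lt]
  intro y
  have hpsh := minGrowth_zero (m := m)
  refine lt_of_lt_of_le (b := (((y + 1 : ℝ)) : EReal)) (by exact_mod_cast lt_add_one y) ?_
  refine le_sSup ⟨fun x => ((1 : ℝ) : EReal) * 0 + ((y + 1 : ℝ) : EReal),
    ⟨⟨hpsh.1.affine one_pos (y + 1), y + 1, 1, fun z hz => ?_⟩, fun x hx => absurd hx (by simp)⟩, ?_⟩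
  · have := Real.log_nonneg hz
    have h2 : y + 1 ≤ Real.log ‖z‖ + (y + 1) := by linarith
    simpa only [mul_zero, zero_add, EReal.coe_le_coe_iff] using h2
  · simp

theorem robinConst_empty {m : ℕ} [NeZero m] :
    robinConst (∅ : Set (EuclideanSpace ℂ (Fin m))) = ⊤ := by
  have hs : ∀ z, greenFnStar (∅ : Set (EuclideanSpace ℂ (Fin m))) z = ⊤ := fun z =>
    top_le_iff.1 ((greenFn_empty z).ge.trans (greenFn_le_star _ z))
  have : Nonempty (Fin m) := ⟨0⟩
  simp [robinConst, hs]

/-- Taylor's inequality in a form without a pluripolarity hypothesis.  A compact `K` is replaced by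
closed neighbourhoods `K'`, which contain balls and so are not pluripolar, and whose Robin constants
do not exceed that of `K`; a competitor for `V_K` is at most `ε` on a small enough `K'`. -/
theorem greenFn_le_of_taylor {m : ℕ} {Cm : ℝ} (hCm : 0 < Cm)
    (hTaylor : ∀ s : ℝ, 0 < s → ∀ K : Set (EuclideanSpace ℂ (Fin m)),
      IsCompact K → ¬ Pluripolar K → K ⊆ closedBall 0 s →
      ∀ z ∈ closedBall (0 : EuclideanSpace ℂ (Fin m)) s,
        greenFnStar K z ≤ (Cm : EReal) * (((Real.log s + Real.log 2 : ℝ) : EReal) + robinConst K))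
    {K : Set (EuclideanSpace ℂ (Fin m))} (hK : IsCompact K) (hne : K.Nonempty) {s ρ : ℝ}
    (hs : 0 < s) (hKs : K ⊆ closedBall 0 s) (hρ : robinConst K ≤ (ρ : EReal))
    {z : EuclideanSpace ℂ (Fin m)} (hz : z ∈ closedBall 0 s) :
    greenFn K z ≤ ((Cm * (Real.log (2 * s) + Real.log 2 + ρ) : ℝ) : EReal) := by
  refine sSup_le ?_
  rintro _ ⟨u, ⟨hu, hu0⟩, rfl⟩
  by_contra hcon
  rw [not_le] at hcon
  obtain ⟨y, hy1, hy2⟩ := EReal.lt_iff_exists_real_btwn.1 hcon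
  rw [EReal.coe_lt_coe_iff] at hy1
  set B := Cm * (Real.log (2 * s) + Real.log 2 + ρ) with hB
  have husc := upperSemicontinuousOn_univ_iff.1 hu.1.1
  have hopen : IsOpen {x | u x < ((y - B : ℝ) : EReal)} := husc.isOpen_preimage _
  obtain ⟨δ, hδ, hsub⟩ := hK.exists_cthickening_subset_open hopen (fun x hx =>
    lt_of_le_of_lt (hu0 x hx) (by exact_mod_cast sub_pos.2 hy1))
  set δ' := min δ s with hδ'
  have hδ'0 : 0 < δ' := lt_min hδ hs
  have hK's : cthickening δ' K ⊆ closedBall 0 (2 * s) := by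
    rw [hK.cthickening_eq_biUnion_closedBall hδ'0.le]
    refine Set.iUnion₂_subset fun x hx y hy => ?_
    have h1 := mem_closedBall.1 (hKs hx)
    have h2 := mem_closedBall.1 hy
    have h3 := dist_triangle y x 0
    have h4 := min_le_right δ s
    rw [mem_closedBall]
    linarith
  obtain ⟨x₀, hx₀⟩ := hne
  have hnp : ¬ Pluripolar (cthickening δ' K) :=
    not_pluripolar_of_closedBall_subset hδ'0 (closedBall_subset_cthickening hx₀ δ')
  have h1 := hTaylor (2 * s) (by positivity) _ (hK.cthickening) hnp hK's z
    (closedBall_subset_closedBall (by linarith) hz)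
  have h2 : (Cm : EReal) * (((Real.log (2 * s) + Real.log 2 : ℝ) : EReal) +
      robinConst (cthickening δ' K)) ≤ (B : EReal) := by
    rw [hB, EReal.coe_mul, EReal.coe_add (Real.log (2 * s) + Real.log 2)]
    exact mul_le_mul_of_nonneg_left
      (add_le_add le_rfl ((robinConst_anti (self_subset_cthickening K)).trans hρ))
      (by exact_mod_cast hCm.le)
  have h3 : ((1 : ℝ) : EReal) * u z + ((-(y - B) : ℝ) : EReal) ≤ greenFn (cthickening δ' K) z := by
    refine le_sSup ⟨fun x => ((1 : ℝ) : EReal) * u x + ((-(y - B) : ℝ) : EReal),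
      ⟨⟨hu.1.affine one_pos _, ?_⟩, fun x hx => ?_⟩, rfl⟩
    · obtain ⟨C, R₀, hC⟩ := hu.2
      refine ⟨C - (y - B), R₀, fun x hx => ?_⟩
      rw [coe_affine_le_iff one_pos]
      refine (hC x hx).trans ?_
      rw [EReal.coe_le_coe_iff]
      linarith
    · have := hsub (cthickening_mono (min_le_left δ s) K hx)
      rw [← EReal.coe_zero, coe_affine_le_iff one_pos]
      refine (le_of_lt this).trans ?_
      rw [EReal.coe_le_coe_iff]
      linarith
  have h4 := (coe_affine_le_iff one_pos _).1 (h3.trans ((greenFn_le_star _ z).trans (h1.trans h2)))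
  have h5 := hy2.trans_le h4
  rw [EReal.coe_lt_coe_iff] at h5
  linarith

/-- If `V_{E_R}` is small compared with `log R` on `|z| ≤ R`, then each competitor `u` for
`V_{E_R}`, multiplied by `l`, glues with `log⁺(|z| / r)` to a competitor for `V_{E_r}`. -/
theorem greenFn_mul_le_greenFn {m : ℕ} (E : Set (EuclideanSpace ℂ (Fin m))) {R r l A : ℝ}
    (hr : 0 < r) (hrR : 2 * r ≤ R) (hl : 0 < l) (hA : l * A ≤ Real.log (R / 2) - Real.log r)
    (hbd : ∀ z ∈ closedBall (0 : EuclideanSpace ℂ (Fin m)) R,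
      greenFn (E ∩ closedBall 0 R) z ≤ (A : EReal))
    {z : EuclideanSpace ℂ (Fin m)} (hz : ‖z‖ < R) :
    greenFn (E ∩ closedBall 0 R) z * (l : EReal) ≤ greenFn (E ∩ closedBall 0 r) z := by
  rw [← EReal.le_div_iff_mul_le (by exact_mod_cast hl) (EReal.coe_ne_top l)]
  refine sSup_le ?_
  rintro _ ⟨u, ⟨hu, hu0⟩, rfl⟩
  rw [EReal.le_div_iff_mul_le (by exact_mod_cast hl) (EReal.coe_ne_top l)]
  set f : EuclideanSpace ℂ (Fin m) → EReal := fun x => (l : EReal) * u x + ((0 : ℝ) : EReal)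
  set g : EuclideanSpace ℂ (Fin m) → EReal :=
    fun x => ((Real.log (max (‖x‖ / r) 1) : ℝ) : EReal) with hg
  have hR : 0 < R := by linarith
  have hpsh := (hu.1.affine hl 0).glue (pshOn_logPlus hr) (R' := R / 2) (R := R) (by linarith) (by
    intro x hx1 hx2
    rw [coe_affine_le_iff hl]
    have h1 : u x ≤ (A : EReal) := (le_sSup ⟨u, ⟨hu, hu0⟩, rfl⟩ : u x ≤ greenFn _ x).trans
      (hbd x (by simpa using hx2.le))
    refine h1.trans ?_
    rw [EReal.coe_le_coe_iff, le_div_iff₀ hl, sub_zero, mul_comm]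
    refine hA.trans ?_
    rw [← Real.log_div (by positivity) hr.ne']
    refine Real.log_le_log (by positivity) (le_max_of_le_left ?_)
    gcongr)
  refine le_trans ?_ (le_sSup ⟨fun x => if ‖x‖ < R then max (f x) (g x) else g x,
    ⟨⟨hpsh, -Real.log r, R, fun x hx => ?_⟩, fun x hx => ?_⟩, rfl⟩)
  · beta_reduce
    rw [if_pos hz]
    refine le_max_of_le_left ?_
    simp [f, mul_comm]
  · have h1 : 1 ≤ ‖x‖ / r := by rw [le_div_iff₀ hr]; linarith
    have hx0 : ‖x‖ ≠ 0 := by linarith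
    simp only [if_neg (not_lt.2 hx), hg, max_eq_left h1, Real.log_div hx0 hr.ne', sub_eq_add_neg,
      le_refl]
  · have hxr : ‖x‖ ≤ r := by simpa using hx.2
    have h1 : ‖x‖ / r ≤ 1 := (div_le_one₀ hr).2 hxr
    have hxR : ‖x‖ < R := by linarith
    beta_reduce
    rw [if_pos hxR]
    refine max_le ?_ ?_
    · rw [← EReal.coe_zero, coe_affine_le_iff hl]
      simpa using hu0 x ⟨hx.1, by simpa using (by linarith : ‖x‖ ≤ R)⟩
    · simp [hg, max_eq_right h1]

/-! ### Conclusion -/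

/-- **Corollary.** Suppose `C_m > 0` satisfies Taylor's inequality
`sup_{|z|≤s} V_K*(z) ≤ C_m (log s + log 2 - log C(K))` for every `s > 0` and every
compact non-pluripolar `K ⊆ {|z| ≤ s}` (recall `log C(K) = -γ(K)`).  If `E ⊆ ℂ^m` is
closed and `limsup_{R→∞} log C(E_R) / log R ≥ β > (C_m - 1)/C_m` for some `β > 0`,
then `E` is non-thin at `∞`. -/
theorem nonthinAtInfty_of_capacity_growth {m : ℕ} (Cm : ℝ) (hCm : 0 < Cm)
    (hTaylor : ∀ s : ℝ, 0 < s → ∀ K : Set (EuclideanSpace ℂ (Fin m)),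
      IsCompact K → ¬ Pluripolar K → K ⊆ closedBall 0 s →
      ∀ z ∈ closedBall (0 : EuclideanSpace ℂ (Fin m)) s,
        greenFnStar K z ≤ (Cm : EReal) * (((Real.log s + Real.log 2 : ℝ) : EReal) + robinConst K))
    (E : Set (EuclideanSpace ℂ (Fin m))) (hE : IsClosed E)
    (β : ℝ) (hβ : 0 < β) (hβ' : (Cm - 1) / Cm < β)
    (hcap : (β : EReal) ≤ Filter.limsup
      (fun R : ℝ => (-(robinConst (E ∩ closedBall 0 R))) / ((Real.log R : ℝ) : EReal)) atTop) :
    NonthinAtInfty E := by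
  rcases Nat.eq_zero_or_pos m with rfl | hm
  · -- On `ℂ^0` the Robin constant is a `limsup` over the trivial filter, so Taylor's inequality
    -- for `K = ℂ^0` would read `0 ≤ -∞`.
    exfalso
    have h1 := hTaylor 1 one_pos Set.univ isCompact_univ
      (not_pluripolar_of_closedBall_subset (x := 0) one_pos (Set.subset_univ _))
      (fun x _ => by simp [Subsingleton.elim x 0]) 0 (by simp)
    have h2 : robinConst (Set.univ : Set (EuclideanSpace ℂ (Fin 0))) = ⊥ := by
      have : BoundedSpace (EuclideanSpace ℂ (Fin 0)) := inferInstance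
      rw [robinConst, Bornology.cobounded_eq_bot, limsup_bot]
    rw [h2, EReal.add_bot, EReal.coe_mul_bot_of_pos hCm] at h1
    have h3 := (greenFn_nonneg _ _).trans ((greenFn_le_star _ _).trans h1)
    simp at h3
  have : NeZero m := ⟨hm.ne'⟩
  obtain ⟨b, hb1, hb2⟩ := exists_between hβ'
  set a := Cm * (1 - b) with ha
  have ha1 : a < 1 := by
    rw [div_lt_iff₀ hCm] at hb1
    rw [ha]
    linarith
  obtain ⟨l, hl1, hla⟩ : ∃ l : ℝ, 1 < l ∧ l * a < 1 := by
    have : ∀ᶠ l : ℝ in nhdsWithin 1 (Set.Ioi 1), l * a < 1 := by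
      have hc : Tendsto (fun l : ℝ => l * a) (nhdsWithin 1 (Set.Ioi 1)) (nhds (1 * a)) :=
        ((continuous_id.mul continuous_const).tendsto 1).mono_left nhdsWithin_le_nhds
      exact hc.eventually_lt_const (by linarith)
    obtain ⟨l, h1, h2⟩ := (this.and self_mem_nhdsWithin).exists
    exact ⟨l, h2, h1⟩
  have hl0 : 0 < l := by linarith
  have hfreq := frequently_lt_of_lt_limsup (f := atTop) (b := (b : EReal)) (h :=
    lt_of_lt_of_le (by exact_mod_cast hb2) hcap)
  intro z
  -- `R` is taken among the radii where the capacity is large, so large that the linear bound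
  -- with slope `l * a < 1` in `log R` lies below `log (R / 2) - log r`.
  have key : ∀ r : ℝ, 0 < r → ∃ R : ℝ, greenFn (E ∩ closedBall 0 R) z ≠ ⊤ ∧
      greenFn (E ∩ closedBall 0 R) z * (l : EReal) ≤ greenFn (E ∩ closedBall 0 r) z := by
    intro r hr
    have hev : ∀ᶠ R : ℝ in atTop, l * (Cm * (2 * Real.log 2)) + Real.log 2 + Real.log r ≤
        (1 - l * a) * Real.log R :=
      (Real.tendsto_log_atTop.const_mul_atTop (by linarith)).eventually_ge_atTop _
    obtain ⟨R, hRb, hRev, hR1, hR2, hR3⟩ := (hfreq.and_eventually (hev.and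
      ((eventually_gt_atTop 1).and ((eventually_ge_atTop (2 * r)).and
        (eventually_gt_atTop ‖z‖))))).exists
    have hR0 : 0 < R := by linarith
    have hlog : 0 < Real.log R := Real.log_pos hR1
    rw [EReal.lt_div_iff (by exact_mod_cast hlog) (EReal.coe_ne_top _), ← EReal.coe_mul] at hRb
    have hrob : robinConst (E ∩ closedBall 0 R) ≤ ((-(b * Real.log R) : ℝ) : EReal) := by
      rw [EReal.coe_neg]
      exact (EReal.lt_neg_comm.1 hRb).le
    have hne : (E ∩ closedBall 0 R).Nonempty := by
      rw [Set.nonempty_iff_ne_empty]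
      intro h
      rw [h, robinConst_empty] at hrob
      exact absurd (top_le_iff.1 hrob) (EReal.coe_ne_top _)
    have hcomp : IsCompact (E ∩ closedBall 0 R) := (isCompact_closedBall 0 R).inter_left hE
    have hbd : ∀ x ∈ closedBall (0 : EuclideanSpace ℂ (Fin m)) R,
        greenFn (E ∩ closedBall 0 R) x ≤ _ := fun x hx =>
      greenFn_le_of_taylor hCm hTaylor hcomp hne hR0 Set.inter_subset_right hrob hx
    refine ⟨R, ?_, greenFn_mul_le_greenFn E hr hR2 hl0 ?_ hbd hR3⟩
    · exact ne_top_of_le_ne_top (EReal.coe_ne_top _) (hbd z (by simpa using hR3.le))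
    · rw [Real.log_mul two_ne_zero hR0.ne', Real.log_div hR0.ne' two_ne_zero]
      have : l * (Cm * (Real.log 2 + Real.log R + Real.log 2 + -(b * Real.log R))) =
          l * (Cm * (2 * Real.log 2)) + l * a * Real.log R := by rw [ha]; ring
      linarith
  set F : ℝ → EReal := fun R => greenFn (E ∩ closedBall 0 R) z with hF
  have hanti : Antitone F := fun R S hRS =>
    greenFn_anti (Set.inter_subset_inter_right E (closedBall_subset_closedBall hRS)) z
  have hlim := tendsto_atTop_iInf hanti
  have hL0 : 0 ≤ ⨅ R, F R := le_iInf fun R => greenFn_nonneg _ z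
  have hLtop : (⨅ R, F R) ≠ ⊤ := by
    obtain ⟨R, hR, -⟩ := key 1 one_pos
    exact ne_top_of_le_ne_top hR (iInf_le F R)
  have hLl : (⨅ R, F R) * (l : EReal) ≤ ⨅ R, F R := by
    refine le_iInf fun r => ?_
    obtain ⟨R, -, hR⟩ := key (max r 1) (by positivity)
    refine le_trans ?_ (hR.trans (hanti (le_max_left r 1)))
    exact mul_le_mul_of_nonneg_right (iInf_le F R) (by exact_mod_cast hl0.le)
  have hL : (⨅ R, F R) = 0 := by
    obtain ⟨t, ht⟩ : ∃ t : ℝ, (⨅ R, F R) = t :=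
      ⟨_, (EReal.coe_toReal hLtop (ne_bot_of_le_ne_bot EReal.zero_ne_bot hL0)).symm⟩
    rw [ht] at hL0 hLl ⊢
    have h1 : 0 ≤ t := by exact_mod_cast hL0
    have h2 : t * l ≤ t := by exact_mod_cast hLl
    have h3 : t = 0 := by nlinarith
    rw [h3, EReal.coe_zero]
  rw [hL] at hlim
  exact hlim

end
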